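/- Let j ≥ 1 and n be integers with n − j ≥ 5, let m = ⌈(n−j)/2⌉, and define p̃(α) = d_{n−j−1}(α) − α·d_{m−1}(α)·d_{n−m−j−1}(α). Then p̃(1/√5) > 0, p̃(1/2) < 0, and consequently there exists a real number α with 1/√5 < α < 1/2 such that p̃(α) = 0. -/

import Mathlib

/-- `dpoly n α = ∑_{m=0}^{⌊n/2⌋} (-1)^m C(n-m, m) α^(2m)`. -/
noncomputable def dpoly (n : ℕ) (α : ℝ) : ℝ :=
  ∑ m ∈ Finset.range (n / 2 + 1), (-1 : ℝ) ^ m * (Nat.choose (n - m) m : ℝ) * α ^ (2 * m)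

/-!
The polynomials `d_n` satisfy `d_{n+2} = d_{n+1} - α² d_n`, so if `r` and `s` are the roots of
`x² - x + α²`, then `(r - s) d_n(α) = r^{n+1} - s^{n+1}`. Here `r - s = √(1 - 4α²)`, which for
`α > 0` is at least `α` exactly when `α ≤ 1/√5`; in that range this Binet formula gives
`α d_p(α) d_q(α) < d_{p+q+1}(α)`. At `α = 1/2` the roots collide, `d_n(1/2) = (n + 1) / 2^n`, and
`d_{p+q+1} - α d_p d_q` takes the value `(1 - pq) / 2^{p+q+1}`, which is negative once `pq ≥ 2`.
-/

theorem dpoly_eq_sum_range {n K : ℕ} (hK : n / 2 < K) (α : ℝ) :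
    dpoly n α =
      ∑ m ∈ Finset.range K, (-1 : ℝ) ^ m * (Nat.choose (n - m) m : ℝ) * α ^ (2 * m) := by
  refine Finset.sum_subset (Finset.range_subset_range.2 hK) fun m _ hm => ?_
  have hlt : n - m < m := by
    rw [Finset.mem_range] at hm
    omega
  rw [Nat.choose_eq_zero_of_lt hlt, Nat.cast_zero, mul_zero, zero_mul]

section Recurrence

variable (n : ℕ) (α : ℝ)

@[simp]
theorem dpoly_zero : dpoly 0 α = 1 := by simp [dpoly]

@[simp]
theorem dpoly_one : dpoly 1 α = 1 := by simp [dpoly]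

theorem dpoly_add_two : dpoly (n + 2) α = dpoly (n + 1) α - α ^ 2 * dpoly n α := by
  rw [dpoly_eq_sum_range (by omega : (n + 2) / 2 < n + 2),
    dpoly_eq_sum_range (by omega : (n + 1) / 2 < n + 2),
    dpoly_eq_sum_range (by omega : n / 2 < n + 1), Finset.sum_range_succ',
    Finset.sum_range_succ' _ (n + 1), Finset.mul_sum, add_sub_right_comm,
    ← Finset.sum_sub_distrib]
  congr 1
  refine Finset.sum_congr rfl fun m hm => ?_
  have hm : m ≤ n := Finset.mem_range_succ_iff.1 hm
  have pascal : (n + 2 - (m + 1)).choose (m + 1) =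
      (n - m).choose m + (n + 1 - (m + 1)).choose (m + 1) := by
    rw [show n + 2 - (m + 1) = n - m + 1 by omega, Nat.add_sub_add_right, Nat.choose_succ_succ']
  rw [pascal]
  push_cast
  ring

theorem continuous_dpoly : Continuous (dpoly n) := by
  unfold dpoly
  fun_prop

end Recurrence

theorem sub_mul_dpoly {r s α : ℝ} (hadd : r + s = 1) (hmul : r * s = α ^ 2) (n : ℕ) :
    (r - s) * dpoly n α = r ^ (n + 1) - s ^ (n + 1) := by
  induction n using Nat.twoStepInduction with
  | zero => simp
  | one =>
    rw [dpoly_one]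
    linear_combination (s - r) * hadd
  | more n ih₀ ih₁ =>
    rw [dpoly_add_two, ← hmul]
    linear_combination ih₁ - r * s * ih₀ - (r ^ (n + 2) - s ^ (n + 2)) * hadd

theorem dpoly_one_half (n : ℕ) : dpoly n (1 / 2) = (n + 1) * (1 / 2) ^ n := by
  induction n using Nat.twoStepInduction with
  | zero => simp
  | one => norm_num
  | more n ih₀ ih₁ =>
    rw [dpoly_add_two, ih₀, ih₁]
    push_cast
    ring

theorem sub_mul_sub_lt_mul_sub_mul {x y z w : ℝ} (hy : 0 < y) (hyx : y < x) (hw : 0 < w)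
    (hwz : w < z) : (x - y) * (z - w) < x * z - y * w := by
  linarith [mul_pos hy (sub_pos.2 hwz), mul_pos hw (sub_pos.2 hyx)]

/-- The polynomial `d_{p+q+1}(α) - α d_p(α) d_q(α)`, whose roots are the candidate cut-off values
for the Katz ranking. The `p̃` of the paper is the case `p = m - 1`, `q = n - m - j - 1`; indexing
by `p` and `q` keeps natural-number subtraction out of the development. -/
noncomputable def katzGap (p q : ℕ) (α : ℝ) : ℝ :=
  dpoly (p + q + 1) α - α * dpoly p α * dpoly q α

section KatzGap

variable (p q : ℕ)

theorem continuous_katzGap : Continuous (katzGap p q) :=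
  (continuous_dpoly _).sub ((continuous_id.mul (continuous_dpoly p)).mul (continuous_dpoly q))

theorem katzGap_one_half : katzGap p q (1 / 2) = (1 - p * q) * (1 / 2) ^ (p + q + 1) := by
  simp only [katzGap, dpoly_one_half]
  push_cast
  ring

theorem katzGap_pos_of_roots {r s α : ℝ} (hadd : r + s = 1) (hmul : r * s = α ^ 2) (hs : 0 < s)
    (hα : 0 < α) (hle : α ≤ r - s) : 0 < katzGap p q α := by
  have hsr : s < r := sub_pos.1 (hα.trans_le hle)
  have binet := sub_mul_dpoly hadd hmul
  have hprod : (r ^ (p + 1) - s ^ (p + 1)) * (r ^ (q + 1) - s ^ (q + 1)) <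
      r ^ (p + 1) * r ^ (q + 1) - s ^ (p + 1) * s ^ (q + 1) :=
    sub_mul_sub_lt_mul_sub_mul (pow_pos hs _) (pow_lt_pow_left₀ hsr hs.le p.succ_ne_zero)
      (pow_pos hs _) (pow_lt_pow_left₀ hsr hs.le q.succ_ne_zero)
  have hnonneg (k : ℕ) : 0 ≤ r ^ (k + 1) - s ^ (k + 1) :=
    sub_nonneg.2 (pow_le_pow_left₀ hs.le hsr.le _)
  have hlt : (r - s) ^ 2 * (α * dpoly p α * dpoly q α) <
      (r - s) ^ 2 * dpoly (p + q + 1) α := calc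
    _ = α * ((r ^ (p + 1) - s ^ (p + 1)) * (r ^ (q + 1) - s ^ (q + 1))) := by
      rw [← binet, ← binet]
      ring
    _ ≤ (r - s) * ((r ^ (p + 1) - s ^ (p + 1)) * (r ^ (q + 1) - s ^ (q + 1))) :=
      mul_le_mul_of_nonneg_right hle (mul_nonneg (hnonneg p) (hnonneg q))
    _ < (r - s) * (r ^ (p + 1) * r ^ (q + 1) - s ^ (p + 1) * s ^ (q + 1)) :=
      mul_lt_mul_of_pos_left hprod (sub_pos.2 hsr)
    _ = (r - s) ^ 2 * dpoly (p + q + 1) α := by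
      rw [sq, mul_assoc, binet]
      ring
  exact sub_pos.2 (lt_of_mul_lt_mul_left hlt (sq_nonneg _))

theorem katzGap_pos {α : ℝ} (hα : 0 < α) (hα5 : 5 * α ^ 2 ≤ 1) : 0 < katzGap p q α := by
  set D := √(1 - 4 * α ^ 2)
  have hα2 : 0 < α ^ 2 := pow_pos hα 2
  have hD2 : D ^ 2 = 1 - 4 * α ^ 2 := Real.sq_sqrt (by linarith)
  have hD1 : D < 1 := (Real.sqrt_lt' one_pos).2 (by linarith)
  have hαD : α ≤ D := Real.le_sqrt_of_sq_le (by linarith)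
  exact katzGap_pos_of_roots p q (r := (1 + D) / 2) (s := (1 - D) / 2) (by ring)
    (by linear_combination -hD2 / 4) (by linarith) hα (by linarith)

end KatzGap

theorem stmt19_general {p q : ℕ} (hpq : 1 < p * q) :
    0 < katzGap p q (1 / √5) ∧ katzGap p q (1 / 2) < 0 ∧
      ∃ α : ℝ, 1 / √5 < α ∧ α < 1 / 2 ∧ katzGap p q α = 0 := by
  have hpos : 0 < katzGap p q (1 / √5) :=
    katzGap_pos p q (by positivity) (by norm_num [div_pow])
  have hneg : katzGap p q (1 / 2) < 0 := by
    rw [katzGap_one_half]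
    exact mul_neg_of_neg_of_pos (sub_neg.2 (mod_cast hpq)) (by positivity)
  have hle : 1 / √5 ≤ 1 / 2 :=
    one_div_le_one_div_of_le two_pos (Real.le_sqrt_of_sq_le (by norm_num))
  obtain ⟨α, ⟨hlt, hgt⟩, hroot⟩ :=
    intermediate_value_Ioo' hle (continuous_katzGap p q).continuousOn ⟨hneg, hpos⟩
  exact ⟨hpos, hneg, α, hlt, hgt, hroot⟩

theorem stmt19 (j n : ℕ) (hj : 1 ≤ j) (hn : j + 5 ≤ n)
    (m : ℕ) (hm : m = (n - j + 1) / 2)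
    (ptilde : ℝ → ℝ)
    (hp : ∀ α : ℝ, ptilde α
      = dpoly (n - j - 1) α - α * dpoly (m - 1) α * dpoly (n - m - j - 1) α) :
    0 < ptilde (1 / Real.sqrt 5) ∧ ptilde (1 / 2) < 0 ∧
      ∃ α : ℝ, 1 / Real.sqrt 5 < α ∧ α < 1 / 2 ∧ ptilde α = 0 := by
  obtain rfl : ptilde = katzGap (m - 1) (n - m - j - 1) := funext fun α => by
    rw [hp, katzGap, show m - 1 + (n - m - j - 1) + 1 = n - j - 1 by omega]
  exact stmt19_general (Nat.mul_le_mul (by omega : 2 ≤ m - 1) (by omega : 1 ≤ n - m - j - 1))
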